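/- arXiv:1601.06351 — 4 statements merged into one kernel-verified Lean document; each statement's English description precedes it below -/
import Mathlib

section
/- Let β ∈ ℝ, let a < b be real numbers, and let u : ℝ → ℝ be differentiable on [a, b]. Suppose there is a constant J ∈ ℝ such that u′(t) − β u(t) = J for all t ∈ [a, b]. Then (b − a) J = B(β(b − a)) u(b) − B(−β(b − a)) u(a). -/
/-- The Bernoulli function `B(s) = s / (e^s - 1)` for `s ≠ 0`, with `B(0) = 1`. -/
noncomputable def bernoulliFn (s : ℝ) : ℝ :=
  if s = 0 then 1 else s / (Real.exp s - 1)

/-- A function whose derivative vanishes on `[a, b]` takes the same value at both endpoints. -/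
theorem eq_endpoints_of_hasDerivAt_zero {f : ℝ → ℝ} {a b : ℝ} (hab : a ≤ b)
    (hf : ∀ t ∈ Set.Icc a b, HasDerivAt f 0 t) : f b = f a :=
  constant_of_has_deriv_right_zero
    (fun t ht => (hf t ht).continuousAt.continuousWithinAt)
    (fun t ht => (hf t (Set.Ico_subset_Icc_self ht)).hasDerivWithinAt)
    b (Set.right_mem_Icc.2 hab)

/-- Reflection formula for the Bernoulli function. -/
theorem bernoulliFn_neg (s : ℝ) : bernoulliFn (-s) = Real.exp s * bernoulliFn s := by
  by_cases hs : s = 0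
  · simp [bernoulliFn, hs]
  · have hE : Real.exp s - 1 ≠ 0 := by simpa [sub_eq_zero] using hs
    have hE' : 1 - Real.exp s ≠ 0 := by rw [← neg_sub]; exact neg_ne_zero.2 hE
    simp only [bernoulliFn, neg_eq_zero, hs, if_false, Real.exp_neg]
    have h : (Real.exp s)⁻¹ - 1 = (1 - Real.exp s) / Real.exp s := by
      field_simp
    rw [h, div_div_eq_mul_div, mul_div_assoc', div_eq_div_iff hE' hE]
    ring

/-- The one-dimensional Scharfetter--Gummel two-point flux formula: if the flux
`J = u' - β u` is constant on `[a, b]`, then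
`(b - a) J = B(β (b - a)) u(b) - B(-β (b - a)) u(a)`. -/
theorem scharfetter_gummel_1d (β a b J : ℝ) (hab : a < b) (u u' : ℝ → ℝ)
    (hderiv : ∀ t ∈ Set.Icc a b, HasDerivAt u (u' t) t)
    (hflux : ∀ t ∈ Set.Icc a b, u' t - β * u t = J) :
    (b - a) * J
      = bernoulliFn (β * (b - a)) * u b - bernoulliFn (-(β * (b - a))) * u a := by
  rw [bernoulliFn_neg]
  rcases eq_or_ne β 0 with rfl | hβ
  · have key : u b - J * b = u a - J * a :=
      eq_endpoints_of_hasDerivAt_zero (f := fun t => u t - J * t) hab.le fun t ht => by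
        have h := (hderiv t ht).sub ((hasDerivAt_id t).const_mul J)
        refine h.congr_deriv ?_
        linarith [hflux t ht]
    simp only [bernoulliFn, zero_mul, if_true, Real.exp_zero]
    linarith
  · have key : Real.exp (-β * b) * (β * u b + J) = Real.exp (-β * a) * (β * u a + J) :=
      eq_endpoints_of_hasDerivAt_zero (f := fun t => Real.exp (-β * t) * (β * u t + J))
        hab.le fun t ht => by
        have h := ((hasDerivAt_id t).const_mul (-β)).exp.mul
          (((hderiv t ht).const_mul β).add_const J)
        refine h.congr_deriv ?_
        simp only [id, ← hflux t ht]
        ring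
    have hs : β * (b - a) ≠ 0 := mul_ne_zero hβ (sub_ne_zero.2 hab.ne')
    have hE : Real.exp (β * (b - a)) - 1 ≠ 0 := by simpa [sub_eq_zero] using hs
    have key' : β * u b + J = Real.exp (β * (b - a)) * (β * u a + J) := by
      have h := congrArg (Real.exp (β * b) * ·) key
      simp only [← mul_assoc, ← Real.exp_add] at h
      rw [show β * b + -β * b = 0 by ring, show β * b + -β * a = β * (b - a) by ring,
        Real.exp_zero, one_mul] at h
      exact h
    simp only [bernoulliFn, hs, if_false]
    rw [mul_div_assoc', div_mul_eq_mul_div, div_mul_eq_mul_div, ← sub_div, eq_div_iff hE]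
    linear_combination (a - b) * key'
end

section
/- Let d ≥ 1, let x₀, x₁, …, x_d be affinely independent points in ℝ^d, and let q ∈ ℝ^d. Let p ∈ ℝ^d be a constant vector such that for every pair of indices i ≠ j with 0 ≤ i, j ≤ d, ∫₀¹ e^{−q·(x_i + s(x_j − x_i))} (p · (x_j − x_i)) ds = 0. Then p = 0. -/
open RealInnerProductSpace

/-- A constant factor is zero as soon as its integral against a continuous positive weight is. -/
theorem eq_zero_of_integral_continuous_pos_mul_eq_zero {w : ℝ → ℝ} (hw : Continuous w)
    (hpos : ∀ s, 0 < w s) {a b c : ℝ} (hab : a < b) (h : ∫ s in a..b, w s * c = 0) : c = 0 := by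
  rw [intervalIntegral.integral_mul_const] at h
  have integral_pos : 0 < ∫ s in a..b, w s :=
    intervalIntegral.intervalIntegral_pos_of_pos (hw.intervalIntegrable a b) hpos hab
  exact (mul_eq_zero.mp h).resolve_left integral_pos.ne.symm

/-- A vector orthogonal to all edges of a family of points spanning the space is zero. -/
theorem eq_zero_of_inner_sub_eq_zero {ι V : Type*} [NormedAddCommGroup V] [InnerProductSpace ℝ V]
    {x : ι → V} (hx : vectorSpan ℝ (Set.range x) = ⊤) {p : V}
    (h : ∀ i j, ⟪p, x j - x i⟫ = 0) : p = 0 := by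
  have hle : vectorSpan ℝ (Set.range x) ≤ LinearMap.ker (innerₛₗ ℝ p) := by
    rw [vectorSpan_def, Submodule.span_le]
    rintro _ ⟨_, ⟨j, rfl⟩, _, ⟨i, rfl⟩, rfl⟩
    simpa using h i j
  have hp : p ∈ LinearMap.ker (innerₛₗ ℝ p) := hle (hx ▸ Submodule.mem_top)
  simpa using hp

/-- Unisolvence of the lowest-order exponentially weighted edge degrees of freedom:
if all exponentially weighted tangential edge moments of the constant field `p`
over the edges of a nondegenerate `d`-simplex vanish, then `p = 0`. -/
theorem eafe_lowest_order_unisolvence (d : ℕ) (hd : 1 ≤ d)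
    (x : Fin (d + 1) → EuclideanSpace ℝ (Fin d)) (hx : AffineIndependent ℝ x)
    (q p : EuclideanSpace ℝ (Fin d))
    (h : ∀ i j : Fin (d + 1), i ≠ j →
      (∫ s in (0:ℝ)..1, Real.exp (-⟪q, x i + s • (x j - x i)⟫) * ⟪p, x j - x i⟫) = 0) :
    p = 0 := by
  have hspan : vectorSpan ℝ (Set.range x) = ⊤ :=
    hx.vectorSpan_eq_top_of_card_eq_finrank_add_one (by simp)
  refine eq_zero_of_inner_sub_eq_zero hspan fun i j => ?_
  rcases eq_or_ne i j with rfl | hij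
  · simp
  · exact eq_zero_of_integral_continuous_pos_mul_eq_zero
      (by fun_prop) (fun s => Real.exp_pos _) one_pos (h i j hij)
end

section
/- Let n ≥ 1, r ≥ n, q ∈ ℝ^n, and let v₀, v₁, …, v_n be affinely independent points in ℝ^n with barycentric coordinates λ₀, …, λ_n; denote by ∇λ_j the (constant) gradient of λ_j. Let p₁, …, p_n be polynomial functions on ℝ^n of degree at most r − 1 and define the vector field u(x) = e^{−q·x} Σ_{j=1}^{n} p_j(x) ∇λ_j. Suppose that for each i ∈ {1,…,n} and every x in the affine span of {v_k : 0 ≤ k ≤ n, k ≠ i} (the face F_i = {λ_i = 0} of the simplex), the orthogonal projection of u(x) onto the direction space of that affine span is zero. Then for each j ∈ {1,…,n} there exists a polynomial function q_j of degree at most r − n such that p_j(x) = (∏_{k ∈ {1,…,n}, k ≠ j} λ_k(x)) q_j(x) for all x ∈ ℝ^n. -/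
open RealInnerProductSpace

namespace MvPolynomial

variable {σ : Type*}

/-- The substitution `X i ↦ X i - e i * L`, that is, the projection along the direction `e`
onto the zero set of `L` when `L` is affine of slope one along `e`. -/
noncomputable def slide (L : MvPolynomial σ ℝ) (e : σ → ℝ) :
    MvPolynomial σ ℝ →ₐ[ℝ] MvPolynomial σ ℝ :=
  aeval fun i => X i - C (e i) * L

theorem eval_slide (L : MvPolynomial σ ℝ) (e : σ → ℝ) (p : MvPolynomial σ ℝ) (x : σ → ℝ) :
    eval x (slide L e p) = eval (fun i => x i - e i * eval x L) p := by
  induction p using MvPolynomial.induction_on with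
  | C a => simp [slide]
  | add p q hp hq => simp [hp, hq]
  | mul_X p i hp => simp only [map_mul, hp]; simp [slide]

theorem dvd_sub_slide (L : MvPolynomial σ ℝ) (e : σ → ℝ) (p : MvPolynomial σ ℝ) :
    L ∣ p - slide L e p := by
  induction p using MvPolynomial.induction_on with
  | C a => simp [slide]
  | add p q hp hq =>
    rw [map_add, add_sub_add_comm]
    exact dvd_add hp hq
  | mul_X p i hp =>
    have hX : slide L e (X i) = X i - C (e i) * L := by simp [slide]
    rw [map_mul, hX, show p * X i - slide L e p * (X i - C (e i) * L)
      = (p - slide L e p) * X i + slide L e p * C (e i) * L by ring]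
    exact dvd_add (hp.mul_right _) (dvd_mul_left _ _)

theorem dvd_of_slide_eq_zero {L : MvPolynomial σ ℝ} {e : σ → ℝ} {p : MvPolynomial σ ℝ}
    (h : slide L e p = 0) : L ∣ p := by
  simpa [h] using dvd_sub_slide L e p

/-- A polynomial that vanishes on the zero set of `L` is divisible by `L`, provided that
the projection along some direction `e` maps into this zero set. -/
theorem dvd_of_eval_eq_zero {L : MvPolynomial σ ℝ} {e : σ → ℝ} (hL : slide L e L = 0)
    {p : MvPolynomial σ ℝ} (hp : ∀ x, eval x L = 0 → eval x p = 0) : L ∣ p := by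
  refine dvd_of_slide_eq_zero (e := e) (MvPolynomial.funext fun x => ?_)
  rw [eval_slide, map_zero]
  apply hp
  rw [← eval_slide, hL, map_zero]

theorem prime_of_slide_eq_zero {L : MvPolynomial σ ℝ} {e : σ → ℝ} (hL : slide L e L = 0)
    (h0 : L ≠ 0) {x : σ → ℝ} (hx : eval x L = 0) : Prime L := by
  refine ⟨h0, fun hu => ?_, fun a b hab => ?_⟩
  · have := hu.map (eval x)
    simp [hx] at this
  · obtain ⟨d, hd⟩ := hab
    have : slide L e a * slide L e b = 0 := by rw [← map_mul, hd, map_mul, hL, zero_mul]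
    exact (mul_eq_zero.mp this).imp dvd_of_slide_eq_zero dvd_of_slide_eq_zero

theorem one_le_totalDegree_of_eval_ne {L : MvPolynomial σ ℝ} {x y : σ → ℝ}
    (h : eval x L ≠ eval y L) : 1 ≤ L.totalDegree := by
  by_contra hlt
  rw [totalDegree_eq_zero_iff_eq_C.mp (by omega : L.totalDegree = 0)] at h
  simp at h

theorem totalDegree_add_card_le_of_prod_mul {ι : Type*} (s : Finset ι)
    (f : ι → MvPolynomial σ ℝ) (hf : ∀ i ∈ s, 1 ≤ (f i).totalDegree)
    {Q : MvPolynomial σ ℝ} (hQ : Q ≠ 0) :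
    Q.totalDegree + s.card ≤ ((∏ i ∈ s, f i) * Q).totalDegree := by
  classical
  induction s using Finset.induction_on with
  | empty => simp
  | insert a s ha ih =>
    have hne : ∀ i ∈ insert a s, f i ≠ 0 := fun i hi h => by
      have := hf i hi
      simp [h] at this
    rw [Finset.prod_insert ha, mul_assoc, totalDegree_mul_of_isDomain
      (hne a (Finset.mem_insert_self a s)) (mul_ne_zero (Finset.prod_ne_zero_iff.mpr
        fun i hi => hne i (Finset.mem_insert_of_mem hi)) hQ), Finset.card_insert_of_notMem ha]
    have h1 := hf a (Finset.mem_insert_self a s)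
    have h2 := ih fun i hi => hf i (Finset.mem_insert_of_mem hi)
    omega

/-- The polynomial of the affine function `x ↦ c + ⟪g, x⟫`. -/
noncomputable def affine [Fintype σ] (c : ℝ) (g : EuclideanSpace ℝ σ) : MvPolynomial σ ℝ :=
  C c + ∑ i, C (g i) * X i

theorem eval_affine [Fintype σ] (c : ℝ) (g x : EuclideanSpace ℝ σ) :
    eval (fun i => x i) (affine c g) = c + ⟪g, x⟫ := by
  simp [affine, PiLp.inner_apply, mul_comm]

theorem slide_affine_self [Fintype σ] (c : ℝ) (g e : EuclideanSpace ℝ σ) (h : ⟪g, e⟫ = 1) :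
    slide (affine c g) (fun i => e i) (affine c g) = 0 := by
  refine MvPolynomial.funext fun y => ?_
  obtain ⟨x, rfl⟩ : ∃ x : EuclideanSpace ℝ σ, y = fun i => x i := ⟨WithLp.toLp 2 y, rfl⟩
  rw [eval_slide, eval_affine]
  have hx : (fun i => x i - e i * (c + ⟪g, x⟫)) =
      fun i => (x - (c + ⟪g, x⟫) • e) i := by
    ext i
    simp [mul_comm]
  rw [hx, eval_affine, inner_sub_right, inner_smul_right, h, map_zero]
  ring

end MvPolynomial

/-- If affine functions `c i + ⟪g i, ·⟫` are dual to the vertices of a simplex, then the zero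
set of the one with index `i` is contained in the affine span of the vertices other than `i`. -/
theorem mem_affineSpan_face_of_eq_zero {n : ℕ} {v g : Fin (n + 1) → EuclideanSpace ℝ (Fin n)}
    (hv : AffineIndependent ℝ v) {c : Fin (n + 1) → ℝ}
    (hdual : ∀ i j, c i + ⟪g i, v j⟫ = if i = j then 1 else 0)
    {i : Fin (n + 1)} {x : EuclideanSpace ℝ (Fin n)} (hx : c i + ⟪g i, x⟫ = 0) :
    x ∈ affineSpan ℝ (v '' {k | k ≠ i}) := by
  have htop : affineSpan ℝ (Set.range v) = ⊤ :=
    hv.affineSpan_eq_top_iff_card_eq_finrank_add_one.mpr (by simp)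
  obtain ⟨w, hw, rfl⟩ := eq_affineCombination_of_mem_affineSpan_of_fintype
    (htop ▸ AffineSubspace.mem_top ℝ _ x)
  refine affineCombination_mem_affineSpan_image hw (fun k _ hk => ?_) v
  obtain rfl : k = i := by simpa using hk
  rw [Finset.univ.affineCombination_eq_linear_combination v w hw, inner_sum] at hx
  calc w k = ∑ j, w j * (c k + ⟪g k, v j⟫) := by simp [hdual]
    _ = c k + ∑ j, ⟪g k, w j • v j⟫ := by
      simp [mul_add, Finset.sum_add_distrib, ← Finset.sum_mul, hw, inner_smul_right]
    _ = 0 := hx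

/-- Bubble-function representation lemma for the quasi-polynomial space
`(e^{-q·x} P_{r-1})^n`: if the vector field
`u(x) = e^{-q·x} Σ_{j=1}^n p_j(x) ∇λ_j` (with `p_j` polynomials of degree ≤ `r - 1`)
has vanishing trace (tangential projection) on every face `F_i = {λ_i = 0}`,
`i = 1, …, n`, of the simplex `[v₀, …, v_n]`, then each coefficient factors as
`p_j = (∏_{k ≠ j} λ_k) q_j` with `q_j` a polynomial of degree ≤ `r - n`. -/
theorem bubble_representation (n r : ℕ) (hn : 1 ≤ n) (hr : n ≤ r)
    (q : EuclideanSpace ℝ (Fin n))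
    (v : Fin (n + 1) → EuclideanSpace ℝ (Fin n)) (hv : AffineIndependent ℝ v)
    (lam : Fin (n + 1) → EuclideanSpace ℝ (Fin n) → ℝ)
    (g : Fin (n + 1) → EuclideanSpace ℝ (Fin n)) (c : Fin (n + 1) → ℝ)
    (hlam : ∀ i x, lam i x = c i + ⟪g i, x⟫)
    (hdelta : ∀ i j, lam i (v j) = if i = j then 1 else 0)
    (hsum : ∀ x, (∑ i, lam i x) = 1)
    (p : Fin n → MvPolynomial (Fin n) ℝ)
    (hp : ∀ j, (p j).totalDegree ≤ r - 1)
    (u : EuclideanSpace ℝ (Fin n) → EuclideanSpace ℝ (Fin n))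
    (hu : ∀ x, u x = Real.exp (-⟪q, x⟫) •
      ∑ j : Fin n, (MvPolynomial.eval (fun i => x i) (p j)) • g j.succ)
    (htrace : ∀ i : Fin n, ∀ x ∈ affineSpan ℝ (v '' {k | k ≠ i.succ}),
      ∀ w ∈ (affineSpan ℝ (v '' {k | k ≠ i.succ})).direction, ⟪u x, w⟫ = 0) :
    ∀ j : Fin n, ∃ Q : MvPolynomial (Fin n) ℝ, Q.totalDegree ≤ r - n ∧
      ∀ x : EuclideanSpace ℝ (Fin n),
        MvPolynomial.eval (fun i => x i) (p j)
          = (∏ k ∈ Finset.univ.erase j, lam k.succ x) *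
              MvPolynomial.eval (fun i => x i) Q := by
  intro j
  have hdual : ∀ i j, c i + ⟪g i, v j⟫ = if i = j then 1 else 0 := fun i j => by
    rw [← hlam, hdelta]
  have hslope : ∀ i k : Fin n, ⟪g i.succ, v k.succ - v 0⟫ = if i = k then 1 else 0 := by
    intro i k
    have h1 := hdual i.succ k.succ
    have h0 := hdual i.succ 0
    simp only [Fin.succ_inj, Fin.succ_ne_zero, if_false] at h1 h0
    rw [inner_sub_right]
    linarith
  let L : Fin n → MvPolynomial (Fin n) ℝ := fun k => .affine (c k.succ) (g k.succ)
  have heval : ∀ k (x : EuclideanSpace ℝ (Fin n)),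
      MvPolynomial.eval (fun i => x i) (L k) = lam k.succ x := fun k x => by
    rw [hlam, MvPolynomial.eval_affine]
  have hL0 : ∀ k, MvPolynomial.eval (fun i => v 0 i) (L k) = 0 := fun k => by
    simp [heval, hdelta]
  have hL1 : ∀ k, MvPolynomial.eval (fun i => v k.succ i) (L k) = 1 := fun k => by
    simp [heval, hdelta]
  have hslide : ∀ k, MvPolynomial.slide (L k) (fun i => (v k.succ - v 0) i) (L k) = 0 :=
    fun k => MvPolynomial.slide_affine_self _ _ _ (by simp [hslope])
  have hprime : ∀ k, Prime (L k) := fun k =>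
    MvPolynomial.prime_of_slide_eq_zero (hslide k)
      (fun h => by simpa [h] using hL1 k) (hL0 k)
  have hdvd : ∀ k ∈ Finset.univ.erase j, L k ∣ p j := by
    intro k hk
    have hkj : j ≠ k := (Finset.ne_of_mem_erase hk).symm
    refine MvPolynomial.dvd_of_eval_eq_zero (hslide k) fun y hy => ?_
    obtain ⟨x, rfl⟩ : ∃ x : EuclideanSpace ℝ (Fin n), y = fun i => x i :=
      ⟨WithLp.toLp 2 y, rfl⟩
    rw [heval, hlam] at hy
    have hw : v j.succ - v 0 ∈ (affineSpan ℝ (v '' {i | i ≠ k.succ})).direction :=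
      AffineSubspace.vsub_mem_direction
        (subset_affineSpan ℝ _ ⟨j.succ, by simpa using hkj, rfl⟩)
        (subset_affineSpan ℝ _ ⟨0, by simpa using (Fin.succ_ne_zero k).symm, rfl⟩)
    have ht := htrace k x (mem_affineSpan_face_of_eq_zero hv hdual hy) _ hw
    simpa [hu, inner_smul_left, sum_inner, hslope, Real.exp_ne_zero] using ht
  have hrel : Pairwise (Function.onFun IsRelPrime L) := fun i k hik => by
    refine (hprime i).irreducible.isRelPrime_iff_not_dvd.mpr fun h => ?_
    have h1 := map_dvd (MvPolynomial.eval fun i => v k.succ i) h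
    rw [hL1, heval, hdelta, if_neg (by simpa using hik)] at h1
    simp at h1
  obtain ⟨Q, hQ⟩ := Finset.prod_dvd_of_isRelPrime (hrel.set_pairwise _) hdvd
  refine ⟨Q, ?_, fun x => by simp [hQ, heval, map_prod]⟩
  rcases eq_or_ne Q 0 with rfl | hQ0
  · simp
  have hdeg := MvPolynomial.totalDegree_add_card_le_of_prod_mul (Finset.univ.erase j) L
    (fun k _ => MvPolynomial.one_le_totalDegree_of_eval_ne
      (x := fun i => v k.succ i) (y := fun i => v 0 i) (by simp [hL0, hL1])) hQ0
  rw [← hQ, Finset.card_erase_of_mem (Finset.mem_univ j), Finset.card_univ,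
    Fintype.card_fin] at hdeg
  have := hp j
  omega
end

section
/- Let n ≥ 1, let y₁, …, y_{n+1} be affinely independent points in ℝ^n with barycentric coordinates λ₁, …, λ_{n+1}, let D be an invertible real n×n matrix, and let J ∈ ℝ^n be a constant vector. Then for every index j ∈ {1,…,n+1}: J · ∇λ_j = Σ_{i ≠ j} (D⁻¹J · (y_i − y_j)) (D∇λ_i · ∇λ_j). -/
open RealInnerProductSpace

/-- The action of an `n × n` matrix on vectors of `ℝ^n` (as a linear map). -/
noncomputable def matVec {n : ℕ} (D : Matrix (Fin n) (Fin n) ℝ)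
    (v : EuclideanSpace ℝ (Fin n)) : EuclideanSpace ℝ (Fin n) :=
  (WithLp.equiv 2 (Fin n → ℝ)).symm (D.mulVec (WithLp.equiv 2 (Fin n → ℝ) v))

/-- Barycentric gradients are dual to the edges out of a vertex, so they expand every vector in
terms of its components along these edges. -/
theorem sum_inner_edge_smul_gradient {E ι : Type*} [NormedAddCommGroup E] [InnerProductSpace ℝ E]
    [Fintype ι] [DecidableEq ι] {y g : ι → E} (j : ι)
    (hspan : vectorSpan ℝ (Set.range y) = ⊤)
    (hdual : ∀ i k, ⟪g i, y k - y j⟫ = (if i = k then 1 else 0) - (if i = j then 1 else 0))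
    (u : E) : ∑ i, ⟪u, y i - y j⟫ • g i = u := by
  rw [vectorSpan_range_eq_span_range_vsub_right ℝ y j] at hspan
  refine ext_inner_right ℝ fun v => ?_
  have hv : v ∈ Submodule.span ℝ (Set.range fun i => y i -ᵥ y j) := hspan ▸ Submodule.mem_top
  induction hv using Submodule.span_induction with
  | mem v hv =>
    obtain ⟨k, rfl⟩ := hv
    simp [sum_inner, real_inner_smul_left, hdual, mul_sub]
  | zero => simp
  | add v w _ _ hv hw => simp only [inner_add_right, hv, hw]
  | smul a v _ hv => simp only [real_inner_smul_right, hv]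

/-- A constant flux `J` tested against a barycentric gradient expands in terms of its edge
tangential components `D⁻¹J · (y_i - y_j)` weighted by the stiffness entries
`D∇λ_i · ∇λ_j`:  `J · ∇λ_j = Σ_{i ≠ j} (D⁻¹J · (y_i - y_j)) (D∇λ_i · ∇λ_j)`. -/
theorem constant_flux_edge_expansion (n : ℕ) (hn : 1 ≤ n)
    (y : Fin (n + 1) → EuclideanSpace ℝ (Fin n)) (hy : AffineIndependent ℝ y)
    (lam : Fin (n + 1) → EuclideanSpace ℝ (Fin n) → ℝ)
    (g : Fin (n + 1) → EuclideanSpace ℝ (Fin n)) (c : Fin (n + 1) → ℝ)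
    (hlam : ∀ i z, lam i z = c i + ⟪g i, z⟫)
    (hdelta : ∀ i j, lam i (y j) = if i = j then 1 else 0)
    (hsum : ∀ z, (∑ i, lam i z) = 1)
    (D : Matrix (Fin n) (Fin n) ℝ) (hD : IsUnit D)
    (J : EuclideanSpace ℝ (Fin n)) :
    ∀ j : Fin (n + 1), ⟪J, g j⟫
      = ∑ i ∈ Finset.univ.erase j,
          ⟪matVec D⁻¹ J, y i - y j⟫ * ⟪matVec D (g i), g j⟫ := by
  intro j
  have hdual : ∀ i k, ⟪g i, y k - y j⟫
      = (if i = k then (1 : ℝ) else 0) - (if i = j then 1 else 0) := by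
    intro i k
    rw [← hdelta i k, ← hdelta i j, hlam, hlam, inner_sub_right]
    ring
  have hspan : vectorSpan ℝ (Set.range y) = ⊤ :=
    hy.vectorSpan_eq_top_of_card_eq_finrank_add_one (by simp)
  have hmat : ∀ v, matVec D v = Matrix.toEuclideanLin D v := fun _ => rfl
  have hinv : matVec D (matVec D⁻¹ J) = J := by
    simp [matVec, Matrix.mul_nonsing_inv D ((Matrix.isUnit_iff_isUnit_det D).mp hD)]
  have hexp := sum_inner_edge_smul_gradient j hspan hdual (matVec D⁻¹ J)
  rw [Finset.sum_erase _ (by simp)]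
  conv_lhs => rw [← hinv, ← hexp, hmat, map_sum, sum_inner]
  simp only [map_smul, real_inner_smul_left, hmat]
end
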